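/- arXiv:2107.12196 — 2 statements merged into one kernel-verified Lean document; each statement's English description precedes it below -/
import Mathlib

section
/- Let p = 1 and q = m ≥ 2, so that the group is G(m,1,2), φ(X) = (xy)^m, φ(Y) = x^m + y^m, z = xy(x^m − y^m) and Δ = X(Y² − 4X). Then there is an isomorphism of R-modules S/(z) ≅ R/(X) ⊕ R/(X(Y² − 4X)) ⊕ (R/(Y² − 4X))^{N} ⊕ Coker([[2X, XY],[Y, 2X]])^{2m−2}, where N = 2·binom(m−1,2) + (m−1) and M^{k} denotes the direct sum of k copies of the module M. -/
/-!
Put `u = x^m`, `v = y^m` and `T = ℂ[u,v]`. Then `S` is the direct sum of the `x^a y^b T` for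
`0 ≤ a, b < m`, and `R` acts through the symmetric functions `X = uv`, `Y = u + v` of `T`.
Multiplication by `z = xy(u - v)` maps the `(a, b)` summand to the `(a+1, b+1)` summand (indices
modulo `m`), with a factor `u` or `v` whenever an index wraps around to `0` (`asm_mul`). With
`w = u - v`, the quotient `S/(z)` is therefore the direct sum of

* one copy of `T/(uvw)` (indices `(0, 0)`), which is `R/(X) ⊕ R/(X(Y² - 4X))`;
* `m - 1` copies each of `T/(uw)` and `T/(vw)` (exactly one index `0`), each of them isomorphic to
  the cokernel in the statement;
* `(m - 1)²` copies of `T/(w) = R/(Y² - 4X)`, and `(m - 1)² = 2·binom(m - 1, 2) + (m - 1)`.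

These identifications are computed in `T = R ⊕ R u`, where `u² = Y u - X`. Both sides of the
isomorphism are quotients of the free `T`-module on the pairs `(a, b)`, and the two quotient maps
have the same kernel (`zpol_dvd_asm` and `split_eq_zero`).
-/

open MvPolynomial

noncomputable section

/-- `S = ℂ[x,y]` -/
abbrev Spoly : Type := MvPolynomial Bool ℂ

/-- `R = ℂ[X,Y]` -/
abbrev Rpoly : Type := MvPolynomial (Fin 2) ℂ

def xv : Spoly := X false
def yv : Spoly := X true
def Xv : Rpoly := X 0
def Yv : Rpoly := X 1

/-- The map `R → S`, `X ↦ (xy)^q`, `Y ↦ x^m + y^m`. -/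
def phi (m q : ℕ) : Rpoly →+* Spoly :=
  (aeval ![(xv * yv) ^ q, xv ^ m + yv ^ m]).toRingHom

/-- `z = xy(x^m - y^m)`. -/
def zpol (m : ℕ) : Spoly := xv * yv * (xv ^ m - yv ^ m)

/-- Cokernel of a 2×2 matrix over `R`. -/
abbrev coker (A : Matrix (Fin 2) (Fin 2) Rpoly) : Type :=
  (Fin 2 → Rpoly) ⧸ LinearMap.range A.mulVecLin


/-! ### The ring `T = ℂ[u,v]` over its symmetric subring -/

/-- The ring `T = ℂ[u,v]`, presented as the free rank-two algebra `R ⊕ R·u` over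
`R = ℂ[u,v]^{S₂}`, with `u² = Y u - X`, where `X = uv` and `Y = u + v`. -/
abbrev Qalg : Type := QuadraticAlgebra Rpoly (-Xv) Yv

namespace Qalg

/-- The root `u` of `t² - Y t + X`. -/
def u : Qalg := ⟨0, 1⟩
/-- The conjugate root `v = Y - u`. -/
def v : Qalg := ⟨Yv, -1⟩
/-- The difference `w = u - v`, so that `w² = Y² - 4X`. -/
def w : Qalg := ⟨-Yv, 2⟩

/-- The identification of `T` with the polynomial ring `ℂ[x,y]`, sending `u, v` to `x, y`. The
variables here stand for `x^m, y^m`; the substitution is made later by `MvPolynomial.expand`. -/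
def toS : Qalg →+* Spoly where
  toFun q := phi 1 1 q.re + phi 1 1 q.im * xv
  map_zero' := by simp
  map_one' := by
    simp [QuadraticAlgebra.re_one, QuadraticAlgebra.im_one]
  map_add' a b := by simp; ring
  map_mul' a b := by
    have hX : phi 1 1 Xv = xv * yv := by simp [phi, Xv]
    have hY : phi 1 1 Yv = xv + yv := by simp [phi, Yv]
    simp [hX, hY]; ring

/-- The inverse of `toS`. -/
def ofS : Spoly →ₐ[ℂ] Qalg := aeval fun i => if i then v else u

lemma toS_u : toS u = xv := by simp [toS, u]
lemma toS_v : toS v = yv := by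
  have hY : phi 1 1 Yv = xv + yv := by simp [phi, Yv]
  simp [toS, v, hY]

lemma toS_algebraMap (r : Rpoly) : toS (algebraMap _ _ r) = phi 1 1 r := by
  simp [toS]

lemma toS_ofS (s : Spoly) : toS (ofS s) = s := by
  have : (toS.comp ofS.toRingHom) = RingHom.id _ := by
    apply MvPolynomial.ringHom_ext
    · intro c
      have : ofS (C c) = algebraMap Rpoly Qalg (C c) := by
        rw [← MvPolynomial.algebraMap_eq, AlgHom.commutes]; rfl
      simp [this, toS_algebraMap, phi]
    · rintro (_ | _)
      · simp [ofS, toS_u, xv]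
      · simp [ofS, toS_v, yv]
  exact congrArg (fun f => f s) this

lemma ofS_phi (r : Rpoly) : ofS (phi 1 1 r) = algebraMap _ _ r := by
  have : (ofS.toRingHom.comp (phi 1 1)) = algebraMap Rpoly Qalg := by
    apply MvPolynomial.ringHom_ext
    · intro c
      have : ofS (C c) = algebraMap Rpoly Qalg (C c) := by
        rw [← MvPolynomial.algebraMap_eq, AlgHom.commutes]; rfl
      simpa [phi] using this
    · intro i
      fin_cases i
      · simp [phi, ofS, xv, yv, u, v]
        ext : 1 <;> simp [Xv]
      · simp [phi, ofS, xv, yv, u, v]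
        ext : 1
        · rw [QuadraticAlgebra.re_add]; simp [Yv]
        · rw [QuadraticAlgebra.im_add]; simp
  exact congrArg (fun f => f r) this

lemma ofS_toS (q : Qalg) : ofS (toS q) = q := by
  have hx : ofS xv = u := by simp [ofS, xv]
  simp only [toS, RingHom.coe_mk, MonoidHom.coe_mk, OneHom.coe_mk, map_add, map_mul, ofS_phi, hx]
  ext : 1 <;> simp [u]

/-- The generator of the ideal of `T` by which the `x^a y^b`-component of `S/(z)` is a quotient.
The extra factor `u` (or `v`) for exponent `0` comes from the wrap-around `x · x^(m-1) = u`. -/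
def d {n : ℕ} (a b : Fin (n + 1)) : Qalg :=
  w * (if a = 0 then u else 1) * (if b = 0 then v else 1)

lemma toS_w : toS w = xv - yv := by
  have hY : phi 1 1 Yv = xv + yv := by simp [phi, Yv]
  simp [toS, w, hY, map_ofNat]; ring

end Qalg

open Qalg

/-! ### Decomposition of `S` by exponents modulo `m` -/

/-- The decomposition of `ℂ[x,y]` as the direct sum of the `x^a y^b ℂ[x^m,y^m]`, `0 ≤ a, b < m`,
with `m = n + 1`. -/
def expd (n : ℕ) : (Fin (n + 1) → Fin (n + 1) → Spoly) →+ Spoly where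
  toFun t := ∑ a : Fin (n + 1), ∑ b : Fin (n + 1), xv ^ (a : ℕ) * yv ^ (b : ℕ) * expand (n + 1) (t a b)
  map_zero' := by simp
  map_add' s t := by simp [mul_add, Finset.sum_add_distrib]

lemma xy_eq (i j : ℕ) :
    (xv ^ i * yv ^ j : Spoly) =
      monomial (Finsupp.single false i + Finsupp.single true j) 1 := by
  simp [xv, yv, X_pow_eq_monomial, monomial_mul]

lemma expd_surjective (n : ℕ) : Function.Surjective (expd n) := by
  intro s
  induction s using MvPolynomial.induction_on' with
  | monomial e c =>
    let a : Fin (n + 1) := ⟨e false % (n + 1), Nat.mod_lt _ n.succ_pos⟩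
    let b : Fin (n + 1) := ⟨e true % (n + 1), Nat.mod_lt _ n.succ_pos⟩
    refine ⟨Pi.single a (Pi.single b (monomial (Finsupp.single false (e false / (n + 1)) +
      Finsupp.single true (e true / (n + 1))) c)), ?_⟩
    simp only [expd, AddMonoidHom.coe_mk, ZeroHom.coe_mk]
    rw [Finset.sum_eq_single a, Finset.sum_eq_single b]
    · rw [Pi.single_eq_same, Pi.single_eq_same, xy_eq, expand_monomial, monomial_mul, one_mul]
      congr 2
      ext i : 1
      cases i
      · simp [a, Nat.mod_add_div]
      · simp [b, Nat.mod_add_div]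
    · intro b' _ h; simp [Pi.single_eq_of_ne h]
    · simp
    · intro a' _ h; simp [Pi.single_eq_of_ne h]
    · simp
  | add p q hp hq =>
    obtain ⟨s, rfl⟩ := hp
    obtain ⟨t, rfl⟩ := hq
    exact ⟨s + t, map_add _ _ _⟩

/-- The exponents occurring in `x^a' y^b' p(x^m, y^m)` are congruent to `(a', b')` modulo `m`. -/
lemma coeff_expd_aux (n : ℕ) (p : Spoly) (a b a' b' : Fin (n + 1)) (i : Bool →₀ ℕ) :
    coeff ((n + 1) • i + (Finsupp.single false (a : ℕ) + Finsupp.single true (b : ℕ)))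
      (xv ^ (a' : ℕ) * yv ^ (b' : ℕ) * expand (n + 1) p) =
    if a' = a ∧ b' = b then coeff i p else 0 := by
  rw [xy_eq, coeff_monomial_mul']
  split_ifs with h1 h2 h2
  · obtain ⟨rfl, rfl⟩ := h2
    rw [add_tsub_cancel_right, coeff_expand_smul _ (by omega), one_mul]
  · have key : ∀ (k c c' : ℕ), c < n + 1 → c' < n + 1 → c' ≤ (n + 1) * k + c →
        (n + 1) ∣ (n + 1) * k + c - c' → c' = c := by
      intro k c c' hc hc' hle hd
      have := (Nat.modEq_iff_dvd' hle).2 hd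
      have h3 : c' % (n + 1) = c % (n + 1) := by simpa [Nat.ModEq] using this
      rwa [Nat.mod_eq_of_lt hc, Nat.mod_eq_of_lt hc'] at h3
    rw [one_mul]
    rw [not_and_or] at h2
    rcases h2 with h2 | h2
    · apply coeff_expand_of_not_dvd (i := false)
      intro hd
      apply h2
      have hle := h1 false
      simp at hd hle
      exact Fin.ext (key _ _ _ a.2 a'.2 hle hd)
    · apply coeff_expand_of_not_dvd (i := true)
      intro hd
      apply h2
      have hle := h1 true
      simp at hd hle
      exact Fin.ext (key _ _ _ b.2 b'.2 hle hd)
  · exfalso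
    obtain ⟨rfl, rfl⟩ := h2
    exact h1 le_add_self
  · rfl

lemma expd_injective (n : ℕ) : Function.Injective (expd n) := by
  rw [injective_iff_map_eq_zero]
  intro t ht
  ext a b i
  have := congrArg (coeff ((n + 1) • i +
    (Finsupp.single false (a : ℕ) + Finsupp.single true (b : ℕ)))) ht
  simp only [expd, AddMonoidHom.coe_mk, ZeroHom.coe_mk, coeff_sum, coeff_expd_aux] at this
  rw [Finset.sum_eq_single a, Finset.sum_eq_single b] at this
  · simpa using this
  · intro b' _ h; simp [h]
  · simp
  · intro a' _ h; simp [h]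
  · simp

/-- The decomposition `S = ⨁ x^a y^b T`, with `T` carrying its `R`-module structure. -/
def asm (n : ℕ) : (Fin (n + 1) → Fin (n + 1) → Qalg) →+ Spoly where
  toFun t := expd n fun a b => toS (t a b)
  map_zero' := by simp only [Pi.zero_apply, map_zero]; exact map_zero _
  map_add' s t := by
    rw [← map_add]; congr 1; ext1 a; ext1 b; simp

lemma asm_apply (n : ℕ) (t) : asm n t =
    ∑ a : Fin (n + 1), ∑ b : Fin (n + 1),
      xv ^ (a : ℕ) * yv ^ (b : ℕ) * expand (n + 1) (toS (t a b)) := rfl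

lemma asm_surjective (n : ℕ) : Function.Surjective (asm n) := by
  intro s
  obtain ⟨t, rfl⟩ := expd_surjective n s
  exact ⟨fun a b => ofS (t a b), by simp [asm, toS_ofS]⟩

lemma asm_injective (n : ℕ) : Function.Injective (asm n) := by
  intro s t h
  have := expd_injective n h
  ext1 a; ext1 b
  have := congrFun (congrFun this a) b
  rw [← ofS_toS (s a b), this, ofS_toS]

lemma expand_phi (m : ℕ) (r : Rpoly) : expand m (phi 1 1 r) = phi m m r := by
  have : ((expand m : Spoly →ₐ[ℂ] Spoly).comp (aeval ![(xv * yv) ^ 1, xv ^ 1 + yv ^ 1])) =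
      (aeval ![(xv * yv) ^ m, xv ^ m + yv ^ m] : Rpoly →ₐ[ℂ] Spoly) := by
    apply MvPolynomial.algHom_ext
    intro i
    fin_cases i <;> simp [xv, yv, mul_pow]
  exact congrArg (fun f => f r) this

lemma asm_smul (n : ℕ) (r : Rpoly) (t) : asm n (r • t) = phi (n + 1) (n + 1) r * asm n t := by
  simp only [asm_apply, Finset.mul_sum, Pi.smul_apply, Algebra.smul_def (A := Qalg), map_mul, toS_algebraMap,
    expand_phi]
  exact Finset.sum_congr rfl fun a _ => Finset.sum_congr rfl fun b _ => by ring

/-- Multiplication by `x` permutes the `x^a` cyclically up to the factor `x^m`; `a + 1` is addition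
modulo `n + 1`. -/
lemma pow_succ_fin {A : Type*} [CommRing A] (n : ℕ) (a : Fin (n + 1)) (x : A) :
    x ^ ((a + 1 : Fin (n + 1)) : ℕ) * (if a + 1 = 0 then x ^ (n + 1) else 1) =
      x ^ (a : ℕ) * x := by
  induction a using Fin.lastCases with
  | last => simp [pow_succ]
  | cast a =>
    rw [Fin.coeSucc_eq_succ, if_neg (Fin.succ_ne_zero a)]
    simp [pow_succ]

/-- Multiplication by `z` is a weighted cyclic shift of the components. -/
lemma asm_mul (n : ℕ) (t) : zpol (n + 1) * asm n t =
    asm n (fun a b => d a b * t (a - 1) (b - 1)) := by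
  have hshift : ∀ f : Fin (n + 1) → Spoly, ∑ a, f a = ∑ a, f (a + 1) := fun f =>
    (Equiv.sum_comp (Equiv.addRight (1 : Fin (n + 1))) f).symm
  rw [asm_apply, asm_apply, hshift (fun a => ∑ b : Fin (n + 1), xv ^ (a : ℕ) * yv ^ (b : ℕ) *
    expand (n + 1) (toS (d a b * t (a - 1) (b - 1)))), Finset.mul_sum]
  refine Finset.sum_congr rfl fun a _ => ?_
  rw [hshift (fun b => xv ^ ((a + 1 : Fin (n + 1)) : ℕ) * yv ^ (b : ℕ) *
    expand (n + 1) (toS (d (a + 1) b * t (a + 1 - 1) (b - 1)))), Finset.mul_sum]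
  refine Finset.sum_congr rfl fun b _ => ?_
  have hx := pow_succ_fin n a xv
  have hy := pow_succ_fin n b yv
  have h1 : expand (n + 1) (toS (d (a + 1) (b + 1))) = (xv ^ (n + 1) - yv ^ (n + 1)) *
      (if a + 1 = 0 then xv ^ (n + 1) else 1) * (if b + 1 = 0 then yv ^ (n + 1) else 1) := by
    simp only [d, map_mul, toS_w, apply_ite toS, toS_u, toS_v, map_one,
      apply_ite (expand (n + 1)), map_sub]
    simp [xv, yv]
  simp only [add_sub_cancel_right, map_mul, h1, zpol]
  linear_combination (-(xv ^ (n + 1) - yv ^ (n + 1)) * expand (n + 1) (toS (t a b))) *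
    ((xv ^ (a : ℕ) * xv) * hy + (yv ^ ((b + 1 : Fin (n + 1)) : ℕ) *
      (if b + 1 = 0 then yv ^ (n + 1) else 1)) * hx)

lemma zpol_dvd_asm (n : ℕ) (t) : zpol (n + 1) ∣ asm n t ↔ ∀ a b, d a b ∣ t a b := by
  constructor
  · rintro ⟨s, hs⟩ a b
    obtain ⟨t', rfl⟩ := asm_surjective n s
    rw [asm_mul] at hs
    rw [asm_injective n hs]
    exact Dvd.intro _ rfl
  · intro h
    choose c hc using h
    refine ⟨asm n fun a b => c (a + 1) (b + 1), ?_⟩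
    rw [asm_mul]
    refine congrArg (asm n) ?_
    ext1 a; ext1 b
    simp only [sub_add_cancel]
    exact hc a b

/-! ### The cyclic quotients of `T` as modules over `R` -/

/-- The discriminant `(u - v)²`. -/
abbrev Disc : Rpoly := Yv ^ 2 - 4 * Xv

/-- The constant `1/2` in `R`. -/
def half : Rpoly := C (1 / 2)

lemma two_half : (2 : Rpoly) * half = 1 := by
  have : (2 : Rpoly) = C 2 := (map_ofNat C 2).symm
  rw [half, this, ← C_mul]; norm_num

namespace Qalg

lemma dvd_iff (x y : Qalg) : x ∣ y ↔ ∃ p q : Rpoly,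
    y.re = x.re * p - Xv * (x.im * q) ∧ y.im = x.re * q + x.im * p + Yv * (x.im * q) := by
  constructor
  · rintro ⟨c, rfl⟩
    exact ⟨c.re, c.im, by simp; ring, by simp; ring⟩
  · rintro ⟨p, q, h1, h2⟩
    refine ⟨⟨p, q⟩, ?_⟩
    ext : 1
    · rw [h1]; simp; ring
    · rw [h2]; simp; ring

/-- The quotient map of `T` by `(w)`, with values in `R/(Y² - 4X)`. Modulo `w` one has `2u = Y`, so
`2(r + s u)` becomes `2r + s Y`. -/
def gW : Qalg →ₗ[Rpoly] Rpoly ⧸ Ideal.span {Disc} :=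
  (Submodule.mkQ _).comp (LinearMap.lsmul _ _ 2 ∘ₗ QuadraticAlgebra.reₗ ..
    + LinearMap.lsmul _ _ Yv ∘ₗ QuadraticAlgebra.imₗ ..)

lemma gW_apply (q : Qalg) : gW q = Ideal.Quotient.mk _ (2 * q.re + Yv * q.im) := rfl

lemma gW_surjective : Function.Surjective gW := by
  intro r
  obtain ⟨r, rfl⟩ := Ideal.Quotient.mk_surjective r
  refine ⟨⟨half * r, 0⟩, ?_⟩
  rw [gW_apply]
  congr 1
  linear_combination r * two_half

lemma gW_eq_zero (q : Qalg) : gW q = 0 ↔ w ∣ q := by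
  rw [gW_apply, Ideal.Quotient.eq_zero_iff_dvd, dvd_iff]
  simp only [w, Disc]
  constructor
  · rintro ⟨k, hk⟩
    refine ⟨half * (q.im - Yv * k), k, ?_, ?_⟩
    · linear_combination half * hk - (q.re + 2 * Xv * k) * two_half
    · linear_combination -(q.im - Yv * k) * two_half
  · rintro ⟨p, q, h1, h2⟩
    refine ⟨q, ?_⟩
    rw [h1, h2]; ring

/-- The quotient map of `T` by `(w u v)`. In the basis `1, w` one has `2(r + s u) = (2r + s Y) + s w`,
and multiplication by `X w` exchanges the two summands with factors `X` and `X (Y² - 4X)`. -/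
def gUVW : Qalg →ₗ[Rpoly] (Rpoly ⧸ Ideal.span {Xv}) × (Rpoly ⧸ Ideal.span {Xv * Disc}) :=
  LinearMap.prod ((Submodule.mkQ _).comp (QuadraticAlgebra.imₗ ..))
    ((Submodule.mkQ _).comp (LinearMap.lsmul _ _ 2 ∘ₗ QuadraticAlgebra.reₗ ..
    + LinearMap.lsmul _ _ Yv ∘ₗ QuadraticAlgebra.imₗ ..))

lemma gUVW_apply (q : Qalg) : gUVW q = (Ideal.Quotient.mk _ q.im,
    Ideal.Quotient.mk _ (2 * q.re + Yv * q.im)) := rfl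

lemma gUVW_surjective : Function.Surjective gUVW := by
  rintro ⟨r, s⟩
  obtain ⟨r, rfl⟩ := Ideal.Quotient.mk_surjective r
  obtain ⟨s, rfl⟩ := Ideal.Quotient.mk_surjective s
  refine ⟨⟨half * (s - Yv * r), r⟩, ?_⟩
  rw [gUVW_apply]
  congr 2
  linear_combination (s - Yv * r) * two_half

lemma wuv : w * u * v = ⟨-(Xv * Yv), 2 * Xv⟩ := by
  ext : 1 <;> simp [w, u, v] <;> ring

lemma gUVW_eq_zero (q : Qalg) : gUVW q = 0 ↔ w * u * v ∣ q := by
  rw [gUVW_apply, Prod.mk_eq_zero, Ideal.Quotient.eq_zero_iff_dvd,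
    Ideal.Quotient.eq_zero_iff_dvd, wuv, dvd_iff]
  constructor
  · rintro ⟨⟨l, hl⟩, ⟨k, hk⟩⟩
    simp only [Disc] at hk
    refine ⟨half * (l - Yv * k), k, ?_, ?_⟩
    · linear_combination half * hk - half * Yv * hl - (q.re + 2 * Xv ^ 2 * k) * two_half
    · linear_combination hl - Xv * (l - Yv * k) * two_half
  · rintro ⟨p, q, h1, h2⟩
    refine ⟨⟨2 * p + Yv * q, ?_⟩, ⟨q, ?_⟩⟩
    · rw [h2]; ring
    · rw [h1, h2]; simp only [Disc]; ring

lemma wu : w * u * 1 = ⟨-(2 * Xv), Yv⟩ := by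
  ext : 1 <;> simp [w, u] <;> ring

lemma wv : w * 1 * v = ⟨-(Yv * Yv) + 2 * Xv, Yv⟩ := by
  ext : 1 <;> simp [w, v] <;> ring

/-- The presentation matrix of `T/(w u)` and of `T/(w v)`. -/
abbrev Mat : Matrix (Fin 2) (Fin 2) Rpoly := !![2 * Xv, Xv * Yv; Yv, 2 * Xv]

/-- The quotient map of `T` by `(w u)`, in the basis `-1, u`. -/
def gU : Qalg →ₗ[Rpoly] coker Mat :=
  (Submodule.mkQ _).comp (LinearMap.pi ![-(QuadraticAlgebra.reₗ ..), QuadraticAlgebra.imₗ ..])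

lemma gU_apply (q : Qalg) : gU q = Submodule.Quotient.mk ![-q.re, q.im] := by
  simp only [gU, LinearMap.comp_apply, Submodule.mkQ_apply]
  congr 1
  ext i : 1
  fin_cases i <;> simp

lemma gU_surjective : Function.Surjective gU := by
  intro r
  obtain ⟨r, rfl⟩ := Submodule.Quotient.mk_surjective _ r
  refine ⟨⟨-r 0, r 1⟩, ?_⟩
  rw [gU_apply]
  congr 1
  ext i : 1
  fin_cases i <;> simp

lemma gU_eq_zero (q : Qalg) : gU q = 0 ↔ w * u * 1 ∣ q := by
  rw [gU_apply, Submodule.Quotient.mk_eq_zero, wu, dvd_iff, LinearMap.mem_range]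
  constructor
  · rintro ⟨y, hy⟩
    have h0 := congrFun hy 0
    have h1 := congrFun hy 1
    simp [Matrix.mulVec, dotProduct] at h0 h1
    refine ⟨y 0 + Yv * y 1, -y 1, ?_, ?_⟩
    · linear_combination h0
    · linear_combination -h1
  · rintro ⟨p, q, h1, h2⟩
    refine ⟨![p + Yv * q, -q], ?_⟩
    ext i : 1
    fin_cases i
    · simp [Matrix.mulVec, dotProduct, h1]; ring
    · simp [Matrix.mulVec, dotProduct, h2]; ring

/-- The quotient map of `T` by `(w v)`: the map `gU` composed with the conjugation exchanging
`u` and `v`. -/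
def gV : Qalg →ₗ[Rpoly] coker Mat :=
  (Submodule.mkQ _).comp (LinearMap.pi ![-(QuadraticAlgebra.reₗ ..) -
    LinearMap.lsmul _ _ Yv ∘ₗ QuadraticAlgebra.imₗ .., -QuadraticAlgebra.imₗ ..])

lemma gV_apply (q : Qalg) : gV q = Submodule.Quotient.mk ![-q.re - Yv * q.im, -q.im] := by
  simp only [gV, LinearMap.comp_apply, Submodule.mkQ_apply]
  congr 1
  ext i : 1
  fin_cases i <;> simp

lemma gV_surjective : Function.Surjective gV := by
  intro r
  obtain ⟨r, rfl⟩ := Submodule.Quotient.mk_surjective _ r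
  refine ⟨⟨-r 0 + Yv * r 1, -r 1⟩, ?_⟩
  rw [gV_apply]
  congr 1
  ext i : 1
  fin_cases i <;> simp

lemma gV_eq_zero (q : Qalg) : gV q = 0 ↔ w * 1 * v ∣ q := by
  rw [gV_apply, Submodule.Quotient.mk_eq_zero, wv, dvd_iff, LinearMap.mem_range]
  constructor
  · rintro ⟨y, hy⟩
    have h0 := congrFun hy 0
    have h1 := congrFun hy 1
    simp [Matrix.mulVec, dotProduct] at h0 h1
    refine ⟨-y 0, -y 1, ?_, ?_⟩
    · linear_combination h0 - Yv * h1
    · linear_combination h1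
  · rintro ⟨p, q, h1, h2⟩
    refine ⟨![-p, -q], ?_⟩
    ext i : 1
    fin_cases i
    · simp [Matrix.mulVec, dotProduct, h1, h2]; ring
    · simp [Matrix.mulVec, dotProduct, h2]; ring

end Qalg

/-! ### Assembling the summands -/

/-- The right-hand side, with arbitrary numbers of copies. -/
abbrev Target (N K : ℕ) : Type :=
  (Rpoly ⧸ Ideal.span {Xv}) ×
      (Rpoly ⧸ Ideal.span {Xv * (Yv ^ 2 - 4 * Xv)}) ×
      (Fin N → Rpoly ⧸ Ideal.span {Yv ^ 2 - 4 * Xv}) ×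
      (Fin K → coker !![2 * Xv, Xv * Yv; Yv, 2 * Xv])

/-- The `x^a y^b`-component. -/
def ev {n : ℕ} (a b : Fin (n + 1)) : (Fin (n + 1) → Fin (n + 1) → Qalg) →ₗ[Rpoly] Qalg :=
  LinearMap.proj b ∘ₗ LinearMap.proj a

@[simp] lemma ev_apply {n : ℕ} (a b : Fin (n + 1)) (t) : ev a b t = t a b := rfl

/-- The sum of the quotient maps of all components, grouped by isomorphism type. -/
def split {n N K : ℕ} (eN : Fin N ≃ Fin n × Fin n) (eK : Fin K ≃ Fin n ⊕ Fin n) :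
    (Fin (n + 1) → Fin (n + 1) → Qalg) →ₗ[Rpoly] Target N K :=
  LinearMap.prod (LinearMap.fst _ _ _ ∘ₗ gUVW ∘ₗ ev 0 0) <|
  LinearMap.prod (LinearMap.snd _ _ _ ∘ₗ gUVW ∘ₗ ev 0 0) <|
  LinearMap.prod (LinearMap.pi fun k => gW ∘ₗ ev (eN k).1.succ (eN k).2.succ) <|
  LinearMap.pi fun k => (eK k).elim (fun i => gU ∘ₗ ev 0 i.succ) (fun i => gV ∘ₗ ev i.succ 0)

lemma split_surjective {n N K : ℕ} (eN : Fin N ≃ Fin n × Fin n) (eK : Fin K ≃ Fin n ⊕ Fin n) :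
    Function.Surjective (split eN eK) := by
  rintro ⟨r1, r2, r3, r4⟩
  obtain ⟨q0, h0⟩ := gUVW_surjective (r1, r2)
  choose q3 h3 using fun k => gW_surjective (r3 k)
  choose q4 h4 using fun k => gU_surjective (r4 k)
  choose q5 h5 using fun k => gV_surjective (r4 k)
  refine ⟨Fin.cons (Fin.cons q0 fun i => q4 (eK.symm (.inl i)))
    fun i => Fin.cons (q5 (eK.symm (.inr i))) fun j => q3 (eN.symm (i, j)), ?_⟩
  refine Prod.ext ?_ (Prod.ext ?_ (Prod.ext ?_ ?_))
  · simp [split, h0]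
  · simp [split, h0]
  · ext1 k
    simp [split, h3]
  · ext1 k
    rcases hk : eK k with i | i
    · have : k = eK.symm (.inl i) := by simp [← hk]
      simp [split, h4, this]
    · have : k = eK.symm (.inr i) := by simp [← hk]
      simp [split, h5, this]

lemma split_eq_zero {n N K : ℕ} (eN : Fin N ≃ Fin n × Fin n) (eK : Fin K ≃ Fin n ⊕ Fin n) (t) :
    split eN eK t = 0 ↔ ∀ a b, d a b ∣ t a b := by
  have e3 : (∀ k, gW (t (eN k).1.succ (eN k).2.succ) = 0) ↔
      ∀ i j : Fin n, gW (t i.succ j.succ) = 0 :=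
    ⟨fun h i j => by simpa using h (eN.symm (i, j)), fun h k => h _ _⟩
  have e4 : (∀ k, ((eK k).elim (fun i => gU ∘ₗ ev 0 i.succ) (fun i => gV ∘ₗ ev i.succ 0)) t = 0) ↔
      (∀ i : Fin n, gU (t 0 i.succ) = 0) ∧ (∀ i : Fin n, gV (t i.succ 0) = 0) := by
    constructor
    · intro h
      exact ⟨fun i => by simpa using h (eK.symm (.inl i)),
        fun i => by simpa using h (eK.symm (.inr i))⟩
    · rintro ⟨h1, h2⟩ k
      rcases eK k with i | i
      · exact h1 i
      · exact h2 i
  have e0 : gUVW (t 0 0) = 0 ↔ (gUVW (t 0 0)).1 = 0 ∧ (gUVW (t 0 0)).2 = 0 := Prod.ext_iff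
  have e1 : split eN eK t = 0 ↔ gUVW (t 0 0) = 0 ∧ (∀ i j : Fin n, gW (t i.succ j.succ) = 0) ∧
      (∀ i : Fin n, gU (t 0 i.succ) = 0) ∧ (∀ i : Fin n, gV (t i.succ 0) = 0) := by
    rw [e0, ← e3, ← e4, and_assoc]
    refine Prod.ext_iff.trans (and_congr Iff.rfl (Prod.ext_iff.trans (and_congr Iff.rfl
      (Prod.ext_iff.trans (and_congr ?_ ?_)))))
    · exact _root_.funext_iff
    · exact _root_.funext_iff
  have h0 : gUVW (t 0 0) = 0 ↔ d (0 : Fin (n + 1)) 0 ∣ t 0 0 := by simp [gUVW_eq_zero, d]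
  have h1 (i j : Fin n) : gW (t i.succ j.succ) = 0 ↔ d i.succ j.succ ∣ t i.succ j.succ := by
    simp [gW_eq_zero, d]
  have h2 (i : Fin n) : gU (t 0 i.succ) = 0 ↔ d 0 i.succ ∣ t 0 i.succ := by
    simp [gU_eq_zero, d]
  have h3 (i : Fin n) : gV (t i.succ 0) = 0 ↔ d i.succ 0 ∣ t i.succ 0 := by
    simp [gV_eq_zero, d]
  simp only [e1, h0, h1, h2, h3]
  constructor
  · rintro ⟨k0, k1, k2, k3⟩ a b
    cases a using Fin.cases <;> cases b using Fin.cases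
    exacts [k0, k2 _, k3 _, k1 _ _]
  · exact fun h => ⟨h _ _, fun _ _ => h _ _, fun _ => h _ _, fun _ => h _ _⟩

theorem stmt0 (m : ℕ) (hm : 2 ≤ m) :
    letI : Module Rpoly (Spoly ⧸ Ideal.span {zpol m}) :=
      ((Ideal.Quotient.mk (Ideal.span {zpol m})).comp (phi m m)).toModule
    Nonempty ((Spoly ⧸ Ideal.span {zpol m}) ≃ₗ[Rpoly]
      (Rpoly ⧸ Ideal.span {Xv}) ×
      (Rpoly ⧸ Ideal.span {Xv * (Yv ^ 2 - 4 * Xv)}) ×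
      (Fin (2 * Nat.choose (m - 1) 2 + (m - 1)) → Rpoly ⧸ Ideal.span {Yv ^ 2 - 4 * Xv}) ×
      (Fin (2 * m - 2) → coker !![2 * Xv, Xv * Yv; Yv, 2 * Xv])) := by
  obtain ⟨n, rfl⟩ : ∃ n, m = n + 1 := ⟨m - 1, by omega⟩
  let : Module Rpoly (Spoly ⧸ Ideal.span {zpol (n + 1)}) :=
      ((Ideal.Quotient.mk (Ideal.span {zpol (n + 1)})).comp (phi (n + 1) (n + 1))).toModule
  have hN : 2 * Nat.choose (n + 1 - 1) 2 + (n + 1 - 1) = n * n := by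
    rw [Nat.add_sub_cancel, Nat.choose_two_right, Nat.mul_div_cancel' (Nat.even_mul_pred_self n).two_dvd]
    cases n <;> simp; ring
  have hK : 2 * (n + 1) - 2 = n + n := by omega
  let eN := (finCongr hN).trans finProdFinEquiv.symm
  let eK := (finCongr hK).trans finSumFinEquiv.symm
  let ψ : (Fin (n + 1) → Fin (n + 1) → Qalg) →ₗ[Rpoly] Spoly ⧸ Ideal.span {zpol (n + 1)} :=
    { toFun := fun t => Ideal.Quotient.mk _ (asm n t)
      map_add' := fun s t => by simp
      map_smul' := fun r t => by rw [asm_smul, map_mul]; rfl }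
  have hψ : Function.Surjective ψ := Ideal.Quotient.mk_surjective.comp (asm_surjective n)
  have hker : LinearMap.ker ψ = LinearMap.ker (split eN eK) := by
    ext t
    rw [LinearMap.mem_ker, LinearMap.mem_ker, split_eq_zero, ← zpol_dvd_asm]
    exact Ideal.Quotient.eq_zero_iff_dvd _ _
  exact ⟨(ψ.quotKerEquivOfSurjective hψ).symm ≪≫ₗ Submodule.quotEquivOfEq _ _ hker ≪≫ₗ
    (split eN eK).quotKerEquivOfSurjective (split_surjective eN eK)⟩
end
end

section
/- For all integers p ≥ 1, q ≥ 2 with m = pq, and all integers j, i with 1 ≤ j ≤ p and 0 ≤ i ≤ q−2, the R-submodule of S/(z) generated by the residue classes of the four monomials x^{jq}y^{i+1}, x^{i+1}y^{jq}, y^{m+i+1−jq}, x^{m+i+1−jq} is isomorphic, as an R-module, to the direct sum of two copies of Coker([[Y, 2X^{p+1−j}],[2X^{j}, XY]]). -/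
/-!
Write `r = i + 1`, so `1 ≤ r < q`, and let `A, B, C, D` be the four generators, in the given order.

* Modulo `z` one has `Y • A = 2 X ^ j • C` and `X Y • C = 2 X ^ (p + 1 - j) • A`, so `e₀ ↦ A`,
  `e₁ ↦ -C` induces a map from the cokernel (`rel_one`, `rel_two`). Exchanging `x` and `y` gives
  the same for the pair `B, D`. Together these give a surjection from two copies of the cokernel.
* For injectivity it is enough to evaluate at the zeros of `z` in `ℂ²`. If `ω` is a primitive
  `q`-th root of unity, the substitution `y ↦ ω y` fixes the image of `R` and the zero set of `z`,
  multiplies `A, C` by `ω ^ r ≠ 1` and fixes `B, D`. Hence a relation among the four generators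
  splits into one between `A, C` and one between `B, D`, at the level of values.
* A relation `f A + g C = 0` on the zero set of `z` forces both entries of the adjugate matrix
  applied to `(f, -g)` to vanish on the curve `Δ = 0`, because every point of that curve (up to
  a finite set) is the image of a zero of `z`. As `Δ`, the determinant of the matrix, is reduced,
  it divides both entries (`disc_dvd`), and Cramer's rule puts `(f, -g)` in the image
  of the matrix (`mem_range_of_vanish`).
-/

open MvPolynomial

noncomputable section

/-! ### Divisibility by the discriminant -/

/-- Division with remainder by `Y² - 4 X^p`, which is monic in `Y`. -/
lemma exists_divY (p : ℕ) (h : Rpoly) : ∃ (k : Rpoly) (a b : Polynomial ℂ),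
    h = (Yv ^ 2 - 4 * Xv ^ p) * k + Polynomial.aeval Xv a * Yv + Polynomial.aeval Xv b := by
  induction h using MvPolynomial.induction_on with
  | C c => exact ⟨0, 0, Polynomial.C c, by simp [MvPolynomial.algebraMap_eq]⟩
  | add f g hf hg =>
    obtain ⟨k, a, b, rfl⟩ := hf
    obtain ⟨k', a', b', rfl⟩ := hg
    exact ⟨k + k', a + a', b + b', by simp only [map_add]; ring⟩
  | mul_X f n hf =>
    obtain ⟨k, a, b, rfl⟩ := hf
    fin_cases n
    · refine ⟨k * Xv, a * Polynomial.X, b * Polynomial.X, ?_⟩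
      simp only [map_mul, Polynomial.aeval_X]
      change _ * Xv = _
      ring
    · refine ⟨k * Yv + Polynomial.aeval Xv a, b, 4 * a * Polynomial.X ^ p, ?_⟩
      simp only [map_mul, map_pow, Polynomial.aeval_X, map_ofNat]
      change _ * Yv = _
      ring

lemma exists_divX (h : Rpoly) : ∃ (k : Rpoly) (c : Polynomial ℂ),
    h = Xv * k + Polynomial.aeval Yv c := by
  induction h using MvPolynomial.induction_on with
  | C c => exact ⟨0, Polynomial.C c, by simp [MvPolynomial.algebraMap_eq]⟩
  | add f g hf hg =>
    obtain ⟨k, b, rfl⟩ := hf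
    obtain ⟨k', b', rfl⟩ := hg
    exact ⟨k + k', b + b', by simp only [map_add]; ring⟩
  | mul_X f n hf =>
    obtain ⟨k, b, rfl⟩ := hf
    fin_cases n
    · refine ⟨Xv * k + Polynomial.aeval Yv b, 0, ?_⟩
      simp only [map_zero]
      change _ * Xv = _
      ring
    · refine ⟨k * Yv, b * Polynomial.X, ?_⟩
      simp only [map_mul, Polynomial.aeval_X]
      change _ * Yv = _
      ring

lemma eval_Xv (a b : ℂ) : eval ![a, b] Xv = a := by simp [Xv]

lemma eval_Yv (a b : ℂ) : eval ![a, b] Yv = b := by simp [Yv]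

lemma eval_aeval (v : Fin 2 → ℂ) (t : Rpoly) (c : Polynomial ℂ) :
    eval v (Polynomial.aeval t c) = c.eval (eval v t) := by
  have := Polynomial.hom_eval₂ c (algebraMap ℂ Rpoly) (eval v) t
  rw [← Polynomial.aeval_def] at this
  rw [this, MvPolynomial.algebraMap_eq]
  have hc : (eval v : Rpoly →+* ℂ).comp (C : ℂ →+* Rpoly) = RingHom.id ℂ := by
    ext x
    simp
  rw [hc]
  rfl

lemma poly_eq_zero (c : Polynomial ℂ) (h : ∀ t : ℂ, t ≠ 0 → c.eval t = 0) : c = 0 := by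
  apply Polynomial.eq_zero_of_infinite_isRoot
  apply Set.Infinite.mono (s := {(0 : ℂ)}ᶜ)
  · intro t ht
    exact h t ht
  · exact (Set.finite_singleton (0 : ℂ)).infinite_compl

/-- The discriminant `X (Y² - 4 X^p)` is reduced: a polynomial vanishing on both parts of its zero
set, away from the origin, is divisible by it. -/
lemma disc_dvd (p : ℕ) (hp : 1 ≤ p) (h : Rpoly)
    (h1 : ∀ b : ℂ, b ≠ 0 → eval ![0, b] h = 0)
    (h2 : ∀ a b : ℂ, a ≠ 0 → b ^ 2 = 4 * a ^ p → eval ![a, b] h = 0) :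
    ∃ k, h = Xv * (Yv ^ 2 - 4 * Xv ^ p) * k := by
  obtain ⟨k, a, b, rfl⟩ := exists_divY p h
  have key : ∀ t : ℂ, t ≠ 0 → a.eval t = 0 ∧ b.eval t = 0 := by
    intro t ht
    obtain ⟨s, rfl⟩ := IsAlgClosed.exists_pow_nat_eq t (n := 2) (by norm_num)
    have hs : s ≠ 0 := by
      rintro rfl
      simp at ht
    have e1 := h2 (s ^ 2) (2 * s ^ p) ht (by ring)
    have e2 := h2 (s ^ 2) (-(2 * s ^ p)) ht (by ring)
    simp only [map_add, map_mul, map_sub, map_pow, eval_Xv, eval_Yv, eval_aeval, map_ofNat] at e1 e2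
    have e3 : a.eval (s ^ 2) * s ^ p = 0 := by linear_combination (e1 - e2) / 4
    have e4 : b.eval (s ^ 2) = 0 := by
      linear_combination (e1 + e2) / 2
    refine ⟨?_, e4⟩
    rcases mul_eq_zero.1 e3 with h | h
    · exact h
    · exact absurd h (pow_ne_zero _ hs)
  have ha : a = 0 := poly_eq_zero a fun t ht => (key t ht).1
  have hb : b = 0 := poly_eq_zero b fun t ht => (key t ht).2
  subst ha hb
  obtain ⟨l, c, rfl⟩ := exists_divX k
  have hc : c = 0 := by
    apply poly_eq_zero
    intro t ht
    have e := h1 t ht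
    simp only [map_add, map_mul, map_sub, map_pow, eval_Xv, eval_Yv, eval_aeval, map_ofNat,
      map_zero, zero_pow (by omega : p ≠ 0)] at e
    have e' : t ^ 2 * c.eval t = 0 := by linear_combination e
    rcases mul_eq_zero.1 e' with h | h
    · exact absurd h (pow_ne_zero _ ht)
    · exact h
  subst hc
  exact ⟨l, by simp only [map_zero]; ring⟩

/-! ### Exactness for one pair of generators -/

/-- Every point of `Y² = 4 X^p` with `X ≠ 0` is the image of a point with `x ^ m = y ^ m`. -/
lemma exists_point (p q : ℕ) (hp : 1 ≤ p) (hq : 1 ≤ q) (a b : ℂ) (ha : a ≠ 0)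
    (h : b ^ 2 = 4 * a ^ p) :
    ∃ x y : ℂ, (x * y) ^ q = a ∧ x ^ (p * q) = y ^ (p * q) ∧ 2 * x ^ (p * q) = b := by
  obtain ⟨s, rfl⟩ := IsAlgClosed.exists_pow_nat_eq a (n := 2) (by norm_num)
  obtain ⟨e, he, hb⟩ : ∃ e : ℂ, e ^ 2 = 1 ∧ b = 2 * (s ^ p * e) := by
    have : (b - 2 * s ^ p) * (b + 2 * s ^ p) = 0 := by linear_combination h
    rcases mul_eq_zero.1 this with h | h
    · exact ⟨1, by norm_num, by linear_combination h⟩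
    · exact ⟨-1, by norm_num, by linear_combination h⟩
  obtain ⟨c, hc⟩ := IsAlgClosed.exists_pow_nat_eq e (n := p) (by omega)
  have hc0 : c ≠ 0 := by
    rintro rfl
    rw [zero_pow (by omega)] at hc
    subst hc
    norm_num at he
  have he0 : e ≠ 0 := by
    rintro rfl
    norm_num at he
  have hei : e⁻¹ = e := by
    field_simp
    exact he.symm
  obtain ⟨x, hx⟩ := IsAlgClosed.exists_pow_nat_eq (s * c) (n := q) (by omega)
  obtain ⟨y, hy⟩ := IsAlgClosed.exists_pow_nat_eq (s * c⁻¹) (n := q) (by omega)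
  have hxm : x ^ (p * q) = s ^ p * e := by rw [mul_comm p q, pow_mul, hx, mul_pow, hc]
  have hym : y ^ (p * q) = s ^ p * e := by
    rw [mul_comm p q, pow_mul, hy, mul_pow, inv_pow, hc, hei]
  refine ⟨x, y, ?_, hxm.trans hym.symm, by rw [hxm, hb]⟩
  rw [mul_pow, hx, hy]
  field_simp

lemma Xv_ne_zero : Xv ≠ 0 := X_ne_zero _

lemma disc_ne_zero (p : ℕ) : Xv * (Yv ^ 2 - 4 * Xv ^ p) ≠ 0 := by
  intro h
  have := congrArg (eval ![(1 : ℂ), 0]) h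
  simp [eval_Xv, eval_Yv] at this

/-- Exactness for one pair of generators. Here `p = j + k`, and the pair is
`x ^ (j q) y ^ r`, `y ^ (k q + r)`; a relation between their values on the zero set of `z` already
puts the coefficients in the image of the matrix. -/
lemma mem_range_of_vanish (j k q r : ℕ) (hj : 1 ≤ j) (hq : 1 ≤ q) (f g : Rpoly)
    (H : ∀ x y : ℂ, x * y * (x ^ ((j + k) * q) - y ^ ((j + k) * q)) = 0 →
      eval ![(x * y) ^ q, x ^ ((j + k) * q) + y ^ ((j + k) * q)] f * (x ^ (j * q) * y ^ r) -
      eval ![(x * y) ^ q, x ^ ((j + k) * q) + y ^ ((j + k) * q)] g * y ^ (k * q + r) = 0) :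
    ∃ u v, f = Yv * u + 2 * Xv ^ (k + 1) * v ∧ g = 2 * Xv ^ j * u + Xv * Yv * v := by
  have hm : (j + k) * q ≠ 0 := by
    apply Nat.mul_ne_zero <;> omega
  have key : ∀ a b : ℂ, a ≠ 0 → b ^ 2 = 4 * a ^ (j + k) →
      2 * a ^ j * eval ![a, b] f = b * eval ![a, b] g ∧
      b * eval ![a, b] f = 2 * a ^ k * eval ![a, b] g := by
    intro a b ha hab
    obtain ⟨x, y, h1, h2, h3⟩ := exists_point (j + k) q (by omega) hq a b ha hab
    have hxy : x * y ≠ 0 := by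
      intro h0
      rw [h0, zero_pow (by omega)] at h1
      exact ha h1.symm
    have hy : y ≠ 0 := right_ne_zero_of_mul hxy
    have e := H x y (by rw [h2]; ring)
    have hb : x ^ ((j + k) * q) + y ^ ((j + k) * q) = b := by rw [← h2, ← h3]; ring
    rw [h1, hb] at e
    have e' : eval ![a, b] f * x ^ (j * q) - eval ![a, b] g * y ^ (k * q) = 0 := by
      have : (eval ![a, b] f * x ^ (j * q) - eval ![a, b] g * y ^ (k * q)) * y ^ r = 0 := by
        rw [← e]
        ring
      rcases mul_eq_zero.1 this with h | h
      · exact h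
      · exact absurd h (pow_ne_zero _ hy)
    have hby : b = 2 * (y ^ (j * q) * y ^ (k * q)) := by rw [← h3, h2]; ring
    have hbx : b = 2 * (x ^ (j * q) * x ^ (k * q)) := by rw [← h3]; ring
    have haj : a ^ j = x ^ (j * q) * y ^ (j * q) := by rw [← h1]; ring
    have hak : a ^ k = x ^ (k * q) * y ^ (k * q) := by rw [← h1]; ring
    generalize eval ![a, b] f = F at *
    generalize eval ![a, b] g = G at *
    constructor
    · rw [haj, hby]
      linear_combination 2 * y ^ (j * q) * e'
    · rw [hak, hbx]
      linear_combination 2 * x ^ (k * q) * e'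
  obtain ⟨u, hu⟩ := disc_dvd (j + k) (by omega) (Xv * Yv * f - 2 * Xv ^ (k + 1) * g)
    (by
      intro b _
      simp [eval_Xv])
    (by
      intro a b ha hab
      simp only [map_mul, map_sub, map_pow, eval_Xv, eval_Yv, map_ofNat]
      linear_combination a * (key a b ha hab).2)
  obtain ⟨v, hv⟩ := disc_dvd (j + k) (by omega) (Yv * g - 2 * Xv ^ j * f)
    (by
      intro b hb
      obtain ⟨y, hy⟩ := IsAlgClosed.exists_pow_nat_eq b (n := (j + k) * q) (by omega)
      have hy0 : y ≠ 0 := by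
        rintro rfl
        rw [zero_pow hm] at hy
        exact hb hy.symm
      have e := H 0 y (by ring)
      have hjq : j * q ≠ 0 := by
        apply Nat.mul_ne_zero <;> omega
      rw [zero_pow hm, zero_mul, zero_pow (by omega : q ≠ 0), zero_add, hy, zero_pow hjq] at e
      have e' : eval ![0, b] g * y ^ (k * q + r) = 0 := by linear_combination -e
      have hg : eval ![0, b] g = 0 := by
        rcases mul_eq_zero.1 e' with h | h
        · exact h
        · exact absurd h (pow_ne_zero _ hy0)
      simp [eval_Xv, hg, zero_pow (by omega : j ≠ 0)])
    (by
      intro a b ha hab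
      simp only [map_mul, map_sub, map_pow, eval_Xv, eval_Yv, map_ofNat]
      linear_combination -(key a b ha hab).1)
  refine ⟨u, v, ?_, ?_⟩
  · apply mul_left_cancel₀ (disc_ne_zero (j + k))
    linear_combination Yv * hu + 2 * Xv ^ (k + 1) * hv
  · apply mul_left_cancel₀ (disc_ne_zero (j + k))
    linear_combination 2 * Xv ^ j * hu + Xv * Yv * hv

/-! ### Relations between the generators -/

/-- `Y • A = 2 X ^ j • C` modulo `z`, with shifted parameters and over any ring, so that it also
applies with `x` and `y` exchanged. -/
lemma rel_one {K : Type*} [CommRing K] (x y : K) (j k q r : ℕ) :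
    x * y * (x ^ ((j + 1 + k) * (q + 1)) - y ^ ((j + 1 + k) * (q + 1))) ∣
      (x ^ ((j + 1 + k) * (q + 1)) + y ^ ((j + 1 + k) * (q + 1))) *
        (x ^ ((j + 1) * (q + 1)) * y ^ (r + 1)) -
      2 * ((x * y) ^ (q + 1)) ^ (j + 1) * y ^ (k * (q + 1) + (r + 1)) :=
  ⟨x ^ ((j + 1) * (q + 1) - 1) * y ^ r, by
    have : (j + 1) * (q + 1) - 1 = j * q + j + q := by
      have : (j + 1) * (q + 1) = j * q + j + q + 1 := by ring
      omega
    rw [this]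
    ring⟩

/-- `2 X ^ (p + 1 - j) • A = X Y • C` modulo `z`, with the conventions of `rel_one`. -/
lemma rel_two {K : Type*} [CommRing K] (x y : K) (j k q r : ℕ) :
    x * y * (x ^ ((j + 1 + k) * (q + 1)) - y ^ ((j + 1 + k) * (q + 1))) ∣
      2 * ((x * y) ^ (q + 1)) ^ (k + 1) * (x ^ ((j + 1) * (q + 1)) * y ^ (r + 1)) -
      (x * y) ^ (q + 1) * (x ^ ((j + 1 + k) * (q + 1)) + y ^ ((j + 1 + k) * (q + 1))) *
        y ^ (k * (q + 1) + (r + 1)) :=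
  ⟨x ^ q * y ^ (q + k * (q + 1) + r + 1), by ring⟩

/-! ### The isomorphism from relations and exactness -/

/-- Passage from relations to the isomorphism: `a, c` and `b, d` generate two copies of the
cokernel, in direct sum. -/
lemma span_equiv {N : Type*} [AddCommGroup N] [Module Rpoly N] (a b c d : N) (P Q U V : Rpoly)
    (h1 : P • a = U • c) (h2 : Q • a = V • c) (h3 : P • b = U • d) (h4 : Q • b = V • d)
    (H : ∀ f g f' g' : Rpoly, f • a - g • c + (f' • b - g' • d) = 0 →
      (∃ u v, f = P * u + Q * v ∧ g = U * u + V * v) ∧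
      (∃ u v, f' = P * u + Q * v ∧ g' = U * u + V * v)) :
    Nonempty ((Submodule.span Rpoly {a, b, c, d} : Submodule Rpoly N) ≃ₗ[Rpoly]
      (coker !![P, Q; U, V]) × (coker !![P, Q; U, V])) := by
  let lin (a c : N) : (Fin 2 → Rpoly) →ₗ[Rpoly] N :=
    (LinearMap.proj 0).smulRight a - (LinearMap.proj 1).smulRight c
  have lin_apply (a c : N) (w : Fin 2 → Rpoly) : lin a c w = w 0 • a - w 1 • c := rfl
  have mem_range (w : Fin 2 → Rpoly) : w ∈ LinearMap.range (!![P, Q; U, V]).mulVecLin ↔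
      ∃ u v, w 0 = P * u + Q * v ∧ w 1 = U * u + V * v := by
    constructor
    · rintro ⟨s, rfl⟩
      exact ⟨s 0, s 1, by simp [Matrix.mulVec, dotProduct, Fin.sum_univ_two],
        by simp [Matrix.mulVec, dotProduct, Fin.sum_univ_two]⟩
    · rintro ⟨u, v, h0, h1⟩
      refine ⟨![u, v], ?_⟩
      ext1 t
      fin_cases t
      · simp [Matrix.mulVec, dotProduct, Fin.sum_univ_two, h0]
      · simp [Matrix.mulVec, dotProduct, Fin.sum_univ_two, h1]
  have lin_ker (a c : N) (h1 : P • a = U • c) (h2 : Q • a = V • c) :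
      LinearMap.range (!![P, Q; U, V]).mulVecLin ≤ LinearMap.ker (lin a c) := by
    intro w hw
    obtain ⟨u, v, e0, e1⟩ := (mem_range w).1 hw
    rw [LinearMap.mem_ker, lin_apply, e0, e1, mul_comm P, mul_comm Q, mul_comm U, mul_comm V,
      add_smul, add_smul, mul_smul, mul_smul, mul_smul, mul_smul, h1, h2, sub_self]
  let L : (coker !![P, Q; U, V]) × (coker !![P, Q; U, V]) →ₗ[Rpoly] N :=
    LinearMap.coprod (Submodule.liftQ _ (lin a c) (lin_ker a c h1 h2))
      (Submodule.liftQ _ (lin b d) (lin_ker b d h3 h4))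
  have L_apply (w w' : Fin 2 → Rpoly) :
      L (Submodule.Quotient.mk w, Submodule.Quotient.mk w') =
        w 0 • a - w 1 • c + (w' 0 • b - w' 1 • d) := by
    simp only [L, LinearMap.coprod_apply, Submodule.liftQ_apply]
    rfl
  have hinj : Function.Injective L := by
    rw [← LinearMap.ker_eq_bot, LinearMap.ker_eq_bot']
    rintro ⟨s, s'⟩ hs
    obtain ⟨w, rfl⟩ := Submodule.Quotient.mk_surjective _ s
    obtain ⟨w', rfl⟩ := Submodule.Quotient.mk_surjective _ s'
    rw [L_apply] at hs
    obtain ⟨r1, r2⟩ := H _ _ _ _ hs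
    rw [(Submodule.Quotient.mk_eq_zero _).2 ((mem_range w).2 r1),
      (Submodule.Quotient.mk_eq_zero _).2 ((mem_range w').2 r2)]
    rfl
  have hrange : LinearMap.range L = Submodule.span Rpoly {a, b, c, d} := by
    apply le_antisymm
    · rintro _ ⟨⟨s, s'⟩, rfl⟩
      obtain ⟨w, rfl⟩ := Submodule.Quotient.mk_surjective _ s
      obtain ⟨w', rfl⟩ := Submodule.Quotient.mk_surjective _ s'
      rw [L_apply]
      have ma : a ∈ Submodule.span Rpoly {a, b, c, d} := Submodule.subset_span (by simp)
      have mb : b ∈ Submodule.span Rpoly {a, b, c, d} := Submodule.subset_span (by simp)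
      have mc : c ∈ Submodule.span Rpoly {a, b, c, d} := Submodule.subset_span (by simp)
      have md : d ∈ Submodule.span Rpoly {a, b, c, d} := Submodule.subset_span (by simp)
      exact add_mem (sub_mem (Submodule.smul_mem _ _ ma) (Submodule.smul_mem _ _ mc))
        (sub_mem (Submodule.smul_mem _ _ mb) (Submodule.smul_mem _ _ md))
    · rw [Submodule.span_le]
      rintro n (rfl | rfl | rfl | rfl)
      · exact ⟨(Submodule.Quotient.mk ![1, 0], Submodule.Quotient.mk ![0, 0]), by
          rw [L_apply]; simp⟩
      · exact ⟨(Submodule.Quotient.mk ![0, 0], Submodule.Quotient.mk ![1, 0]), by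
          rw [L_apply]; simp⟩
      · exact ⟨(Submodule.Quotient.mk ![0, -1], Submodule.Quotient.mk ![0, 0]), by
          rw [L_apply]; simp⟩
      · exact ⟨(Submodule.Quotient.mk ![0, 0], Submodule.Quotient.mk ![0, -1]), by
          rw [L_apply]; simp⟩
  exact ⟨((LinearEquiv.ofInjective L hinj).trans (LinearEquiv.ofEq _ _ hrange)).symm⟩

/-! ### Evaluation at points and splitting of relations -/

/-- The point `(x, y)` of `ℂ²`, as an assignment of values to the variables of `S`. -/
def pt (x y : ℂ) : Bool → ℂ := fun t => if t then y else x

lemma eval_pt_xv (x y : ℂ) : eval (pt x y) xv = x := by simp [xv, pt]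

lemma eval_pt_yv (x y : ℂ) : eval (pt x y) yv = y := by simp [yv, pt]

lemma phi_Xv (m q : ℕ) : phi m q Xv = (xv * yv) ^ q := by simp [phi, Xv]

lemma phi_Yv (m q : ℕ) : phi m q Yv = xv ^ m + yv ^ m := by simp [phi, Yv]

lemma eval_phi (m q : ℕ) (x y : ℂ) (f : Rpoly) :
    eval (pt x y) (phi m q f) = eval ![(x * y) ^ q, x ^ m + y ^ m] f := by
  have : (eval (pt x y)).comp (phi m q) = eval ![(x * y) ^ q, x ^ m + y ^ m] := by
    apply MvPolynomial.ringHom_ext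
    · intro c
      simp [phi, MvPolynomial.algebraMap_eq]
    · intro t
      fin_cases t
      · change eval _ (phi m q Xv) = eval _ Xv
        rw [phi_Xv, eval_Xv]
        simp [eval_pt_xv, eval_pt_yv]
      · change eval _ (phi m q Yv) = eval _ Yv
        rw [phi_Yv, eval_Yv]
        simp [eval_pt_xv, eval_pt_yv]
  exact congrArg (fun F : Rpoly →+* ℂ => F f) this

/-- A relation among the four generators in `S/(z)` splits: its two halves vanish separately on the
zero set of `z`. -/
lemma split_vanish (j k q r : ℕ) (hq : 1 ≤ q) (hr : 1 ≤ r) (hrq : r < q) (f g f' g' : Rpoly)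
    (H : zpol ((j + k) * q) ∣
      phi ((j + k) * q) q f * (xv ^ (j * q) * yv ^ r) - phi ((j + k) * q) q g * yv ^ (k * q + r) +
      (phi ((j + k) * q) q f' * (xv ^ r * yv ^ (j * q)) -
        phi ((j + k) * q) q g' * xv ^ (k * q + r)))
    (x y : ℂ) (hz : x * y * (x ^ ((j + k) * q) - y ^ ((j + k) * q)) = 0) :
    eval ![(x * y) ^ q, x ^ ((j + k) * q) + y ^ ((j + k) * q)] f * (x ^ (j * q) * y ^ r) -
      eval ![(x * y) ^ q, x ^ ((j + k) * q) + y ^ ((j + k) * q)] g * y ^ (k * q + r) = 0 ∧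
    eval ![(x * y) ^ q, x ^ ((j + k) * q) + y ^ ((j + k) * q)] f' * (x ^ r * y ^ (j * q)) -
      eval ![(x * y) ^ q, x ^ ((j + k) * q) + y ^ ((j + k) * q)] g' * x ^ (k * q + r) = 0 := by
  have vanish : ∀ x y : ℂ, x * y * (x ^ ((j + k) * q) - y ^ ((j + k) * q)) = 0 →
      eval ![(x * y) ^ q, x ^ ((j + k) * q) + y ^ ((j + k) * q)] f * (x ^ (j * q) * y ^ r) -
      eval ![(x * y) ^ q, x ^ ((j + k) * q) + y ^ ((j + k) * q)] g * y ^ (k * q + r) +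
      (eval ![(x * y) ^ q, x ^ ((j + k) * q) + y ^ ((j + k) * q)] f' * (x ^ r * y ^ (j * q)) -
      eval ![(x * y) ^ q, x ^ ((j + k) * q) + y ^ ((j + k) * q)] g' * x ^ (k * q + r)) = 0 := by
    intro x y h
    obtain ⟨t, ht⟩ := H
    have e := congrArg (eval (pt x y)) ht
    simp only [zpol, map_add, map_sub, map_mul, map_pow, eval_phi, eval_pt_xv, eval_pt_yv, h,
      zero_mul] at e
    exact e
  obtain ⟨w, hw⟩ : ∃ w : ℂ, IsPrimitiveRoot w q :=
    ⟨_, Complex.isPrimitiveRoot_exp q (by omega)⟩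
  have hwr : w ^ r - 1 ≠ 0 := sub_ne_zero.2 (hw.pow_ne_one_of_pos_of_lt (by omega) hrq)
  have hwq (n : ℕ) : (w * y) ^ (n * q) = y ^ (n * q) := by
    rw [mul_pow, mul_comm n q, pow_mul w, hw.pow_eq_one, one_pow, one_mul]
  have e1 := vanish x y hz
  -- The substitution `y ↦ w y` preserves the zero set of `z` and the image of `R`.
  have e2 := vanish x (w * y) (by rw [hwq]; linear_combination w * hz)
  have hX : (x * (w * y)) ^ q = (x * y) ^ q := by
    rw [mul_left_comm, mul_pow w, hw.pow_eq_one, one_mul]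
  rw [hwq, hwq, hX, pow_add (w * y), hwq, mul_pow w y r] at e2
  have e3 : (w ^ r - 1) *
      (eval ![(x * y) ^ q, x ^ ((j + k) * q) + y ^ ((j + k) * q)] f * (x ^ (j * q) * y ^ r) -
      eval ![(x * y) ^ q, x ^ ((j + k) * q) + y ^ ((j + k) * q)] g * y ^ (k * q + r)) = 0 := by
    rw [pow_add y] at e1 ⊢
    linear_combination e2 - e1
  have e4 := (mul_eq_zero.1 e3).resolve_left hwr
  exact ⟨e4, by linear_combination e1 - e4⟩

/-! ### The isomorphism for `S/(z)` -/

/-- The isomorphism for any model `N` of `S/(z)`, with `j + 1`, `j + 1 + k` and `q + 1` in place of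
`j`, `p` and `q`. -/
lemma span_equiv_coker {N : Type*} [CommRing N] [Module Rpoly N] (j k q i : ℕ) (hi : i < q)
    (mk : Spoly →+* N) (mk_zero : ∀ s, mk s = 0 ↔ zpol ((j + 1 + k) * (q + 1)) ∣ s)
    (smul_mk : ∀ (r : Rpoly) (s : Spoly),
      r • mk s = mk (phi ((j + 1 + k) * (q + 1)) (q + 1) r * s)) :
    Nonempty ((Submodule.span Rpoly
        {mk (xv ^ ((j + 1) * (q + 1)) * yv ^ (i + 1)),
         mk (xv ^ (i + 1) * yv ^ ((j + 1) * (q + 1))),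
         mk (yv ^ (k * (q + 1) + (i + 1))),
         mk (xv ^ (k * (q + 1) + (i + 1)))} : Submodule Rpoly N) ≃ₗ[Rpoly]
      (coker !![Yv, 2 * Xv ^ (k + 1); 2 * Xv ^ (j + 1), Xv * Yv]) ×
      (coker !![Yv, 2 * Xv ^ (k + 1); 2 * Xv ^ (j + 1), Xv * Yv])) := by
  have mk_eq (s t : Spoly) (h : zpol ((j + 1 + k) * (q + 1)) ∣ s - t) : mk s = mk t := by
    rw [← sub_eq_zero, ← map_sub, mk_zero]
    exact h
  -- The relations for the second pair come from those of the first after exchanging `x` and `y`.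
  have swap : zpol ((j + 1 + k) * (q + 1)) ∣
      yv * xv * (yv ^ ((j + 1 + k) * (q + 1)) - xv ^ ((j + 1 + k) * (q + 1))) :=
    ⟨-1, by rw [zpol]; ring⟩
  apply span_equiv
  · rw [smul_mk, smul_mk]
    apply mk_eq
    simp only [map_mul, map_pow, map_ofNat, phi_Xv, phi_Yv]
    exact rel_one xv yv j k q i
  · rw [smul_mk, smul_mk]
    apply mk_eq
    simp only [map_mul, map_pow, map_ofNat, phi_Xv, phi_Yv]
    exact rel_two xv yv j k q i
  · rw [smul_mk, smul_mk]
    apply mk_eq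
    simp only [map_mul, map_pow, map_ofNat, phi_Xv, phi_Yv]
    have h := swap.trans (rel_one yv xv j k q i)
    rwa [mul_comm yv xv, add_comm (yv ^ _), mul_comm (yv ^ _) (xv ^ (i + 1))] at h
  · rw [smul_mk, smul_mk]
    apply mk_eq
    simp only [map_mul, map_pow, map_ofNat, phi_Xv, phi_Yv]
    have h := swap.trans (rel_two yv xv j k q i)
    rwa [mul_comm yv xv, add_comm (yv ^ _), mul_comm (yv ^ _) (xv ^ (i + 1))] at h
  · intro f g f' g' h
    rw [smul_mk, smul_mk, smul_mk, smul_mk, ← map_sub, ← map_sub, ← map_add,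
      mk_zero] at h
    have hs := split_vanish (j + 1) k (q + 1) (i + 1) (by omega) (by omega) (by omega) f g f' g' h
    constructor
    · exact mem_range_of_vanish (j + 1) k (q + 1) (i + 1) (by omega) (by omega) f g
        fun x y hz => (hs x y hz).1
    · refine mem_range_of_vanish (j + 1) k (q + 1) (i + 1) (by omega) (by omega) f' g'
        fun x y hz => ?_
      have e := (hs y x (by linear_combination -hz)).2
      rwa [mul_comm y x, add_comm (y ^ _), mul_comm (y ^ (i + 1))] at e

theorem stmt4 (p q : ℕ) (hp : 1 ≤ p) (hq : 2 ≤ q) (j i : ℕ)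
    (hj1 : 1 ≤ j) (hjp : j ≤ p) (hi : i ≤ q - 2) :
    letI : Module Rpoly (Spoly ⧸ Ideal.span {zpol (p * q)}) :=
      ((Ideal.Quotient.mk (Ideal.span {zpol (p * q)})).comp (phi (p * q) q)).toModule
    let M : Submodule Rpoly (Spoly ⧸ Ideal.span {zpol (p * q)}) :=
      Submodule.span Rpoly
        {Ideal.Quotient.mk (Ideal.span {zpol (p * q)}) (xv ^ (j * q) * yv ^ (i + 1)),
         Ideal.Quotient.mk (Ideal.span {zpol (p * q)}) (xv ^ (i + 1) * yv ^ (j * q)),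
         Ideal.Quotient.mk (Ideal.span {zpol (p * q)}) (yv ^ (p * q + i + 1 - j * q)),
         Ideal.Quotient.mk (Ideal.span {zpol (p * q)}) (xv ^ (p * q + i + 1 - j * q))}
    Nonempty (M ≃ₗ[Rpoly]
      (coker !![Yv, 2 * Xv ^ (p + 1 - j); 2 * Xv ^ j, Xv * Yv]) ×
      (coker !![Yv, 2 * Xv ^ (p + 1 - j); 2 * Xv ^ j, Xv * Yv])) := by
  obtain ⟨j, rfl⟩ : ∃ j', j = j' + 1 := ⟨j - 1, by omega⟩
  obtain ⟨k, rfl⟩ : ∃ k, p = j + 1 + k := ⟨p - (j + 1), by omega⟩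
  obtain ⟨q, rfl⟩ : ∃ q', q = q' + 1 := ⟨q - 1, by omega⟩
  have hexp : (j + 1 + k) * (q + 1) + i + 1 - (j + 1) * (q + 1) = k * (q + 1) + (i + 1) := by
    have : (j + 1 + k) * (q + 1) = (j + 1) * (q + 1) + k * (q + 1) := by ring
    omega
  have hexp' : j + 1 + k + 1 - (j + 1) = k + 1 := by omega
  rw [hexp, hexp']
  let inst : Module Rpoly (Spoly ⧸ Ideal.span {zpol ((j + 1 + k) * (q + 1))}) :=
    ((Ideal.Quotient.mk (Ideal.span {zpol ((j + 1 + k) * (q + 1))})).comp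
      (phi ((j + 1 + k) * (q + 1)) (q + 1))).toModule
  exact span_equiv_coker (N := Spoly ⧸ Ideal.span {zpol ((j + 1 + k) * (q + 1))}) j k q i
    (by omega) (Ideal.Quotient.mk _)
    (fun s => by rw [Ideal.Quotient.eq_zero_iff_mem, Ideal.mem_span_singleton])
    (fun r s => by rw [map_mul]; rfl)
end
end
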